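/- Let r ≥ 2, let c > 0 satisfy c^r ln n ≥ 1, and let G be a graph of order n. If k_r(G) ≥ c n^r, then G contains a complete r-partite subgraph K_r(s, …, s, t) whose first r−1 parts have size s = ⌊c^r ln n⌋ and whose last part has size t > n^{1 − c^{r-1}}. -/

import Mathlib

/-! The proof follows an induction on the clique order, run on *ordered* cliques: if a set `M` of ordered
`(k + 1)`-cliques has at least `(k + 1)! c n ^ (k + 1)` members, then `M` itself carries the complete
multipartite graph (`many_tuples_multipartite`). Put `δ = k · k! c = (k + 1)! c - k! c`. Averaging
shows that at least `k! c n ^ k` tuples of length `k` are rich, meaning that they extend to a member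
of `M` in at least `δ n` ways (`exists_rich_prefixes`). By induction there are `m` rich tuples whose
union spans a complete `k`-partite graph with parts of size `m`, where `m = ⌊c ^ k log n⌋`; for
`k = 1` all rich vertices serve, and `m ≥ c n`.

The extension relation is a bipartite graph between these `m` tuples and the vertices, in which every
tuple has degree at least `δ n`. As `2 s ≤ δ m` for `s = ⌊c ^ (k + 1) log n⌋`, a Kővári–Sós–Turán
count (`exists_common_nbrs`) finds `s` of the tuples with at least `(δ / 2) ^ s n ≥ (c / 2) ^ s n`
common extensions, and this exceeds `n ^ (1 - c ^ k)` because `c log (2 / c) < 1`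
(`rpow_lt_pow_mul`). The number of common extensions is also at least `s`, so the tuples can be
matched with distinct extensions (`snoc_blowup`), which feeds the next step of the induction.
-/

/-- The number of cliques of order `r` in `G`. -/
noncomputable def SimpleGraph.cliqueCount {V : Type*} [Fintype V] [DecidableEq V]
    (G : SimpleGraph V) (r : ℕ) : ℕ :=
  letI := Classical.decRel G.Adj
  (G.cliqueFinset r).card

/-- `G` contains a copy of the complete multipartite graph whose parts have
sizes `s 0, …, s (r-1)`. -/
def SimpleGraph.ContainsKPartite {V : Type*} (G : SimpleGraph V) {r : ℕ}
    (s : Fin r → ℕ) : Prop :=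
  ∃ A : Fin r → Finset V,
    (Pairwise fun i j => Disjoint (A i) (A j)) ∧
    (∀ i, (A i).card = s i) ∧
    (∀ i j, i ≠ j → ∀ x ∈ A i, ∀ y ∈ A j, G.Adj x y)

/-! ### Ordered cliques and their blow-ups -/

/-- A tuple of vertices that are pairwise adjacent: an ordered `k`-clique. -/
def IsCliqueTuple {V : Type*} (G : SimpleGraph V) {k : ℕ} (f : Fin k → V) : Prop :=
  ∀ i j, i ≠ j → G.Adj (f i) (f j)

/-- A family of `m` ordered `k`-cliques (indexed by `Fin m`) spanning a complete `k`-partite graph: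
the `i`-th part consists of the `m` distinct vertices `f a i`. -/
def IsBlowup {V : Type*} (G : SimpleGraph V) {m k : ℕ} (f : Fin m → Fin k → V) : Prop :=
  (∀ a b i j, i ≠ j → G.Adj (f a i) (f b j)) ∧ ∀ i, Function.Injective fun a => f a i

/-! ### Double counting -/

/-- In a bipartite graph between `Fin m` and `V` in which each `a : Fin m` has degree at least
`δ * |V|`, some `s` elements of `Fin m` have at least `(δ / 2) ^ s * |V|` common neighbours. This is
the Kővári–Sós–Turán double count of stars with `s` leaves, convexity entering as the power mean
inequality. -/
lemma exists_common_nbrs {V : Type*} [Fintype V] [DecidableEq V] {m s : ℕ} (N : Fin m → Finset V)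
    (δ : ℝ) (hδ : 0 ≤ δ) (hm : 0 < m) (hs : 1 ≤ s) (hsm : 2 * (s : ℝ) ≤ δ * m)
    (hN : ∀ a, δ * Fintype.card V ≤ ((N a).card : ℝ)) (hn : 0 < Fintype.card V) :
    ∃ e : Fin s → Fin m, Function.Injective e ∧ ∃ T : Finset V,
      (δ / 2) ^ s * Fintype.card V ≤ (T.card : ℝ) ∧ ∀ a, T ⊆ N (e a) := by
  classical
  set n := Fintype.card V with hn'
  let D : V → Finset (Fin m) := fun v => Finset.univ.filter fun a => v ∈ N a
  let C : Finset (Fin m) → Finset V := fun S => Finset.univ.filter fun v => ∀ a ∈ S, v ∈ N a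
  have hD : ∑ v, (D v).card = ∑ a, (N a).card := by
    have := Finset.sum_card_bipartiteAbove_eq_sum_card_bipartiteBelow
      (s := (Finset.univ : Finset V)) (t := (Finset.univ : Finset (Fin m))) (fun v a => v ∈ N a)
    simp only [Finset.bipartiteAbove, Finset.bipartiteBelow] at this
    simpa [D] using this
  have hC : ∑ v, ((D v).card.choose s) =
      ∑ S ∈ Finset.powersetCard s (Finset.univ : Finset (Fin m)), (C S).card := by
    have := Finset.sum_card_bipartiteAbove_eq_sum_card_bipartiteBelow
      (s := (Finset.univ : Finset V)) (t := Finset.powersetCard s (Finset.univ : Finset (Fin m)))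
      (fun v S => ∀ a ∈ S, v ∈ N a)
    simp only [Finset.bipartiteAbove, Finset.bipartiteBelow] at this
    rw [← this]
    refine Finset.sum_congr rfl fun v _ => ?_
    rw [← Finset.card_powersetCard]
    congr 1
    ext S
    simp only [D, Finset.mem_powersetCard, Finset.mem_filter, Finset.subset_iff, Finset.mem_univ,
      true_and]
    simp
    tauto
  have hnR : (0 : ℝ) < n := by exact_mod_cast hn
  have hmR : (0 : ℝ) < m := by exact_mod_cast hm
  -- Truncated subtraction: `x v = max (d + 1 - s) 0` for `d` the degree of `v`, and `x v ^ s` is at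
  -- most the falling factorial of `d`.
  let x : V → ℝ := fun v => (((D v).card + 1 - s : ℕ) : ℝ)
  have hx : (n : ℝ) * (δ * m / 2) ≤ ∑ v, x v := by
    have h1 : ∀ v, ((D v).card : ℝ) - s ≤ x v := by
      intro v
      have : (D v).card ≤ ((D v).card + 1 - s) + s := by omega
      have : ((D v).card : ℝ) ≤ x v + s := by
        simp only [x]
        exact_mod_cast this
      linarith
    have h2 := Finset.sum_le_sum fun v (_ : v ∈ Finset.univ) => h1 v
    have h3 : (∑ v, ((D v).card : ℝ)) = ∑ a, ((N a).card : ℝ) := by exact_mod_cast hD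
    have h4 := Finset.sum_le_sum fun a (_ : a ∈ Finset.univ) => hN a
    rw [Finset.sum_sub_distrib, h3] at h2
    simp only [Finset.sum_const, Finset.card_univ, Fintype.card_fin, nsmul_eq_mul, ← hn'] at h2 h4
    nlinarith
  have hpow : (n : ℝ) * (δ * m / 2) ^ s ≤ ∑ v, x v ^ s := by
    obtain ⟨q, rfl⟩ : ∃ q, s = q + 1 := ⟨s - 1, by omega⟩
    have h1 := pow_sum_le_card_mul_sum_pow (s := (Finset.univ : Finset V)) (f := x)
      (fun v _ => Nat.cast_nonneg _) q
    rw [Finset.card_univ, ← hn'] at h1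
    have h2 := (pow_le_pow_left₀ (by positivity) hx (q + 1)).trans h1
    rw [mul_pow, pow_succ (n : ℝ), mul_assoc] at h2
    exact le_of_mul_le_mul_left h2 (by positivity)
  have hdesc : ∀ v, x v ^ s ≤ (s.factorial : ℝ) * ((D v).card.choose s : ℝ) := by
    intro v
    have h := Nat.pow_sub_le_descFactorial (D v).card s
    rw [Nat.descFactorial_eq_factorial_mul_choose] at h
    simp only [x]
    exact_mod_cast h
  have hsum : (n : ℝ) * (δ * m / 2) ^ s ≤ (m : ℝ) ^ s *
      ((Finset.powersetCard s (Finset.univ : Finset (Fin m))).sup fun S => (C S).card : ℕ) := by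
    set t := (Finset.powersetCard s (Finset.univ : Finset (Fin m))).sup fun S => (C S).card with ht
    have h1 : ∑ S ∈ Finset.powersetCard s (Finset.univ : Finset (Fin m)), (C S).card ≤
        m.choose s * t := by
      have := Finset.sum_le_card_nsmul (Finset.powersetCard s (Finset.univ : Finset (Fin m)))
        (fun S => (C S).card) t (fun S hS => Finset.le_sup (f := fun S => (C S).card) hS)
      simpa using this
    have h2 : s.factorial * (m.choose s * t) ≤ m ^ s * t := by
      rw [← mul_assoc, ← Nat.descFactorial_eq_factorial_mul_choose]
      exact Nat.mul_le_mul_right _ (Nat.descFactorial_le_pow m s)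
    have h3 : s.factorial * ∑ v, ((D v).card.choose s) ≤ m ^ s * t := by
      rw [hC]
      exact (Nat.mul_le_mul_left _ h1).trans h2
    have h4 := Finset.sum_le_sum fun v (_ : v ∈ Finset.univ) => hdesc v
    rw [← Finset.mul_sum] at h4
    have h5 : (s.factorial : ℝ) * ∑ v, ((D v).card.choose s : ℝ) ≤ (m : ℝ) ^ s * (t : ℝ) := by
      exact_mod_cast h3
    linarith
  have hsm' : s ≤ m := by
    -- As `δ n` is at most a degree, `δ ≤ 1`, whence `2 s ≤ m`.
    have h1 := hN ⟨0, hm⟩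
    have h2 : ((N ⟨0, hm⟩).card : ℝ) ≤ n := by exact_mod_cast Finset.card_le_univ _
    have h3 : δ ≤ 1 := by
      by_contra h
      nlinarith
    have h4 : (s : ℝ) ≤ m := by
      have : (0 : ℝ) ≤ s := Nat.cast_nonneg s
      nlinarith
    exact_mod_cast h4
  obtain ⟨S, hS, hSt⟩ := Finset.exists_mem_eq_sup (Finset.powersetCard s (Finset.univ : Finset (Fin m)))
    (Finset.powersetCard_nonempty.2 (by simpa using hsm')) (fun S => (C S).card)
  rw [hSt] at hsum
  have hScard : S.card = s := (Finset.mem_powersetCard.1 hS).2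
  refine ⟨S.orderEmbOfFin hScard, (S.orderEmbOfFin hScard).injective, C S, ?_, ?_⟩
  · have h1 : (m : ℝ) ^ s * ((δ / 2) ^ s * n) ≤ (m : ℝ) ^ s * ((C S).card : ℝ) := by
      refine le_trans (le_of_eq ?_) hsum
      rw [← mul_assoc, ← mul_pow, mul_comm (n : ℝ)]
      congr 2
      ring
    exact le_of_mul_le_mul_left h1 (by positivity)
  · intro a v hv
    exact (Finset.mem_filter.1 hv).2 _ (Finset.orderEmbOfFin_mem S hScard a)

/-- Poor `k`-tuples, with fewer than `δ n` extensions in `M`, account for at most `δ n ^ (k + 1)`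
members of `M`, and each rich tuple for at most `n`; hence there are many rich tuples. -/
lemma exists_rich_prefixes {V : Type*} [Fintype V] [DecidableEq V] {k : ℕ}
    (M : Finset (Fin (k + 1) → V)) (δ C : ℝ) (hδ : 0 ≤ δ) (hn : 0 < Fintype.card V)
    (hM : (C + δ) * (Fintype.card V : ℝ) ^ (k + 1) ≤ (M.card : ℝ)) :
    C * (Fintype.card V : ℝ) ^ k ≤
      ((Finset.univ.filter fun g : Fin k → V => δ * Fintype.card V ≤
        ((Finset.univ.filter fun v => (Fin.snoc g v : Fin (k + 1) → V) ∈ M).card : ℝ)).card : ℝ) := by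
  classical
  set n := Fintype.card V with hn'
  let N : (Fin k → V) → Finset V :=
    fun g => Finset.univ.filter fun v => (Fin.snoc g v : Fin (k + 1) → V) ∈ M
  have h1 : M.card ≤ ∑ g, (N g).card := by
    rw [Finset.card_eq_sum_card_fiberwise (f := fun f : Fin (k + 1) → V => (Fin.init f : Fin k → V))
      (t := Finset.univ) (by intro _ _; simp)]
    refine Finset.sum_le_sum fun g _ => ?_
    refine Finset.card_le_card_of_injOn (fun f => f (Fin.last k)) ?_ ?_
    · intro f hf
      simp only [Finset.coe_filter, Set.mem_ofPred_eq] at hf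
      simp only [N, Finset.coe_filter, Finset.mem_univ, true_and, Set.mem_ofPred_eq]
      rw [← hf.2, Fin.snoc_init_self]
      exact hf.1
    · intro f hf f' hf' h
      simp only [Finset.coe_filter, Set.mem_ofPred_eq] at hf hf'
      rw [← Fin.snoc_init_self f, ← Fin.snoc_init_self f', hf.2, hf'.2]
      simp only at h
      rw [h]
  have hnR : (0 : ℝ) < n := by exact_mod_cast hn
  set F := Finset.univ.filter fun g : Fin k → V => δ * n ≤ ((N g).card : ℝ) with hF
  have h2 : ∀ g, ((N g).card : ℝ) ≤ δ * n + (if δ * n ≤ ((N g).card : ℝ) then (n : ℝ) else 0) := by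
    intro g
    have : ((N g).card : ℝ) ≤ n := by exact_mod_cast Finset.card_le_univ _
    split_ifs with h
    · nlinarith
    · linarith
  have h3 : (M.card : ℝ) ≤ ∑ g, ((N g).card : ℝ) := by exact_mod_cast h1
  have h4 := h3.trans (Finset.sum_le_sum fun g (_ : g ∈ Finset.univ) => h2 g)
  rw [Finset.sum_add_distrib, ← Finset.sum_filter] at h4
  simp only [Finset.sum_const, Finset.card_univ, Fintype.card_fun, Fintype.card_fin, nsmul_eq_mul,
    ← hn', ← hF] at h4
  push_cast at h4
  have h5 : C * (n : ℝ) ^ k * n ≤ F.card * n := by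
    have := hM.trans h4
    rw [pow_succ] at this
    nlinarith
  exact le_of_mul_le_mul_right h5 hnR

/-! ### Numerical estimate -/

lemma log_lt_half {x : ℝ} (hx : 0 < x) : Real.log x < x / 2 := by
  have h1 := Real.log_le_sub_one_of_pos (half_pos hx)
  rw [Real.log_div hx.ne' two_ne_zero] at h1
  have := Real.log_two_lt_d9
  linarith

/-- The loss `(c / 2) ^ s` is affordable because `c * log (2 / c) < 1`. -/
lemma rpow_lt_pow_mul {c L : ℝ} {n k s : ℕ} (hn : 0 < n) (hL : L = Real.log n) (hL0 : 0 < L)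
    (hc0 : 0 < c) (hc1 : c ≤ 1) (hs : (s : ℝ) ≤ c ^ (k + 1) * L) :
    (n : ℝ) ^ (1 - c ^ k) < (c / 2) ^ s * n := by
  have hnR : (0 : ℝ) < n := by exact_mod_cast hn
  have hlog : Real.log (c / 2) = - Real.log (2 / c) := by
    rw [← Real.log_inv, inv_div]
  have hcl : c * Real.log (2 / c) < 1 := by
    have h := mul_lt_mul_of_pos_left (log_lt_half (x := 2 / c) (by positivity)) hc0
    have : c * (2 / c / 2) = 1 := by field_simp
    linarith
  have hpos : 0 ≤ Real.log (2 / c) := Real.log_nonneg (by rw [le_div_iff₀ hc0]; linarith)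
  have hck : 0 < c ^ k := by positivity
  rw [← Real.log_lt_log_iff (by positivity) (by positivity), Real.log_rpow hnR,
    Real.log_mul (by positivity) hnR.ne', Real.log_pow, hlog, ← hL]
  have h1 := mul_le_mul_of_nonneg_right hs hpos
  have h2 := mul_lt_mul_of_pos_left hcl (mul_pos hck hL0)
  rw [pow_succ] at h1
  nlinarith

/-! ### The induction on the clique order -/

/-- One step of the induction: a blow-up of `m` rich `k`-tuples yields `s` of them, all extended by
every vertex of a large set `T`. -/
lemma extend_blowup {V : Type*} [Fintype V] [DecidableEq V] (G : SimpleGraph V) {k m s : ℕ}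
    (M : Finset (Fin (k + 1) → V)) (δ : ℝ) (hδ : 0 ≤ δ) (hs : 1 ≤ s) (hm : 0 < m)
    (hsm : 2 * (s : ℝ) ≤ δ * m) (hn : 0 < Fintype.card V) (f : Fin m → Fin k → V)
    (hf : IsBlowup G f)
    (hrich : ∀ a, δ * Fintype.card V ≤
      ((Finset.univ.filter fun v => (Fin.snoc (f a) v : Fin (k + 1) → V) ∈ M).card : ℝ)) :
    ∃ (g : Fin s → Fin k → V) (T : Finset V), IsBlowup G g ∧
      (δ / 2) ^ s * Fintype.card V ≤ (T.card : ℝ) ∧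
      ∀ a, ∀ v ∈ T, (Fin.snoc (g a) v : Fin (k + 1) → V) ∈ M := by
  obtain ⟨e, he, T, hT, hTN⟩ := exists_common_nbrs
    (fun a => Finset.univ.filter fun v => (Fin.snoc (f a) v : Fin (k + 1) → V) ∈ M)
    δ hδ hm hs hsm hrich hn
  refine ⟨fun a => f (e a), T, ⟨fun a b => hf.1 _ _, fun i => (hf.2 i).comp he⟩, hT, ?_⟩
  intro a v hv
  simpa using hTN a hv

lemma adj_of_snoc {V : Type*} {G : SimpleGraph V} {k : ℕ} {g : Fin k → V} {v : V}
    (h : IsCliqueTuple G (Fin.snoc g v : Fin (k + 1) → V)) (i : Fin k) : G.Adj (g i) v := by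
  simpa using h i.castSucc (Fin.last k) (Fin.castSucc_lt_last i).ne

/-- If the set `T` of common extensions has at least `s` elements, matching the tuples with
distinct elements of `T` gives a blow-up of tuples of length `k + 1`. -/
lemma snoc_blowup {V : Type*} [DecidableEq V] (G : SimpleGraph V) {k s : ℕ}
    (M : Finset (Fin (k + 1) → V)) (hM : ∀ f ∈ M, IsCliqueTuple G f)
    (g : Fin s → Fin k → V) (T : Finset V) (hg : IsBlowup G g) (hT : s ≤ T.card)
    (hgT : ∀ a, ∀ v ∈ T, (Fin.snoc (g a) v : Fin (k + 1) → V) ∈ M) :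
    ∃ f : Fin s → Fin (k + 1) → V, (∀ a, f a ∈ M) ∧ IsBlowup G f := by
  let w : Fin s → V := fun a => (T.equivFin.symm (Fin.castLE hT a) : V)
  have hw : Function.Injective w :=
    Subtype.val_injective.comp (T.equivFin.symm.injective.comp (Fin.castLE_injective hT))
  have hwT : ∀ a, w a ∈ T := fun a => (T.equivFin.symm (Fin.castLE hT a)).2
  have hadj : ∀ a b i, G.Adj (g a i) (w b) :=
    fun a b i => adj_of_snoc (hM _ (hgT a _ (hwT b))) i
  refine ⟨fun a => Fin.snoc (g a) (w a), fun a => hgT a _ (hwT a), ?_, ?_⟩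
  · intro a b i j hij
    induction i using Fin.lastCases with
    | last =>
      induction j using Fin.lastCases with
      | last => exact absurd rfl hij
      | cast j => simpa using (hadj b a j).symm
    | cast i =>
      induction j using Fin.lastCases with
      | last => simpa using hadj a b i
      | cast j => simpa using hg.1 a b i j (fun h => hij (by rw [h]))
  · intro i
    induction i using Fin.lastCases with
    | last => simpa using hw
    | cast i => simpa using hg.2 i

/-- The theorem for sets of ordered cliques: a set `M` of at least `(k + 1)! c n ^ (k + 1)` of them
contains all the ordered cliques formed by a tuple `g a` and a vertex of `T`. Working inside an
arbitrary `M`, rather than with all cliques of `G`, lets the induction hypothesis be applied to the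
rich `k`-tuples only. -/
lemma many_tuples_multipartite {V : Type*} [Fintype V] [DecidableEq V] (G : SimpleGraph V) {n : ℕ}
    (hcard : Fintype.card V = n) {c : ℝ} (hc0 : 0 < c) (k : ℕ) :
    1 ≤ k → 1 ≤ c ^ (k + 1) * Real.log n →
    ∀ M : Finset (Fin (k + 1) → V), (∀ f ∈ M, IsCliqueTuple G f) →
    ((k + 1).factorial : ℝ) * c * (n : ℝ) ^ (k + 1) ≤ (M.card : ℝ) →
    ∃ (g : Fin ⌊c ^ (k + 1) * Real.log n⌋₊ → Fin k → V) (T : Finset V), IsBlowup G g ∧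
      (n : ℝ) ^ (1 - c ^ k) < (T.card : ℝ) ∧
      ∀ a, ∀ v ∈ T, (Fin.snoc (g a) v : Fin (k + 1) → V) ∈ M := by
  induction k with
  | zero => intro h; omega
  | succ k ih =>
    intro _ hc M hM hMc
    set L := Real.log n with hL
    have hL0 : 0 < L := by
      by_contra h
      have : 0 < c ^ (k + 1 + 1) := by positivity
      nlinarith
    have hn : 0 < n := by
      rcases Nat.eq_zero_or_pos n with h | h
      · simp [hL, h] at hL0
      · exact h
    have hnR : (0 : ℝ) < n := by exact_mod_cast hn
    have hcV : 0 < Fintype.card V := by omega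
    have hfac : ((k + 1 + 1).factorial : ℝ) * c ≤ 1 := by
      have h1 : (M.card : ℝ) ≤ (n : ℝ) ^ (k + 1 + 1) := by
        have := Finset.card_le_univ M
        simp only [Fintype.card_fun, Fintype.card_fin, hcard] at this
        exact_mod_cast this
      have h2 : 0 < (n : ℝ) ^ (k + 1 + 1) := by positivity
      by_contra h
      nlinarith
    have hc2 : c ≤ 1 / 2 := by
      have h1 : (2 : ℝ) ≤ ((k + 1 + 1).factorial : ℝ) := by
        exact_mod_cast (Nat.self_le_factorial (k + 2)).trans' (by omega)
      nlinarith
    set δ : ℝ := ((k + 1 : ℕ) : ℝ) * ((k + 1).factorial : ℝ) * c with hδ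
    have hfac1 : (1 : ℝ) ≤ ((k + 1).factorial : ℝ) := by exact_mod_cast Nat.factorial_pos (k + 1)
    have hk1 : (1 : ℝ) ≤ ((k + 1 : ℕ) : ℝ) := by exact_mod_cast Nat.succ_pos k
    have hδc : c ≤ δ := by
      have : 1 ≤ ((k + 1 : ℕ) : ℝ) * ((k + 1).factorial : ℝ) := by nlinarith
      nlinarith
    have hδ0 : 0 ≤ δ := hc0.le.trans hδc
    have hrich := exists_rich_prefixes M δ (((k + 1).factorial : ℝ) * c) hδ0 hcV (by
      rw [hcard]
      convert hMc using 2
      rw [Nat.factorial_succ (k + 1), hδ]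
      push_cast
      ring)
    set M' := Finset.univ.filter fun g : Fin (k + 1) → V => δ * Fintype.card V ≤
      ((Finset.univ.filter fun v => (Fin.snoc g v : Fin (k + 1 + 1) → V) ∈ M).card : ℝ) with hM'
    rw [hcard] at hrich
    have hM'c : ∀ f ∈ M', IsCliqueTuple G f := by
      intro f hf
      rw [hM', Finset.mem_filter] at hf
      have h0 : (0 : ℝ) < δ * Fintype.card V := by rw [hcard]; nlinarith
      have h1 := h0.trans_le hf.2
      obtain ⟨v, hv⟩ := Finset.card_pos.1 (by exact_mod_cast h1)
      have h2 := hM _ (Finset.mem_filter.1 hv).2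
      intro i j hij
      simpa using h2 i.castSucc j.castSucc (by simpa using hij)
    set s := ⌊c ^ (k + 1 + 1) * L⌋₊ with hs
    have hs1 : 1 ≤ s := Nat.le_floor (by exact_mod_cast hc)
    have hsle : (s : ℝ) ≤ c ^ (k + 1 + 1) * L := Nat.floor_le (by positivity)
    have key : ∃ (m : ℕ) (f : Fin m → Fin (k + 1) → V), 0 < m ∧ 2 * (s : ℝ) ≤ δ * m ∧
        (∀ a, f a ∈ M') ∧ IsBlowup G f := by
      rcases Nat.eq_zero_or_pos k with rfl | hk
      · have : Subsingleton (Fin (0 + 1)) := inferInstanceAs (Subsingleton (Fin 1))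
        -- Any distinct vertices form a blow-up of `1`-tuples.
        have hb : IsBlowup G (fun a : Fin M'.card => (M'.equivFin.symm a : Fin (0 + 1) → V)) := by
          refine ⟨fun a b i j hij => absurd (Subsingleton.elim i j) hij, fun i a b hab => ?_⟩
          apply M'.equivFin.symm.injective
          apply Subtype.ext
          funext j
          rw [Subsingleton.elim j i]
          exact hab
        have hm : c * n ≤ (M'.card : ℝ) := by simpa using hrich
        have hpos : 0 < M'.card := by
          have : (0 : ℝ) < M'.card := lt_of_lt_of_le (by positivity) hm
          exact_mod_cast this
        refine ⟨_, _, hpos, ?_, fun a => (M'.equivFin.symm a).2, hb⟩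
        have h1 := log_lt_half hnR
        rw [← hL] at h1
        have h2 : 2 * (c ^ 2 * L) ≤ c * (c * n) := by
          have : 0 < c ^ 2 := by positivity
          nlinarith
        have h3 : c * (c * n) ≤ δ * M'.card := mul_le_mul hδc hm (by positivity) hδ0
        simp only [Nat.reduceAdd] at hsle
        linarith
      · have hck : 1 ≤ c ^ (k + 1) * L := by
          have : c ^ (k + 1 + 1) * L ≤ c ^ (k + 1) * L := by
            rw [pow_succ c (k + 1)]
            have : 0 < c ^ (k + 1) * L := by positivity
            nlinarith
          linarith
        obtain ⟨g, T, hg, hT, hgT⟩ := ih hk hck M' hM'c hrich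
        let m := ⌊c ^ (k + 1) * L⌋₊
        have hm1 : 1 ≤ m := Nat.le_floor (by exact_mod_cast hck)
        have hmle : (m : ℝ) ≤ c ^ (k + 1) * L := Nat.floor_le (by positivity)
        have hmT : m ≤ T.card := by
          -- Both sides are compared with `√n`.
          have hn1 : (1 : ℝ) ≤ n := by exact_mod_cast hn
          have h1 : (n : ℝ) ^ (1 / 2 : ℝ) ≤ (n : ℝ) ^ (1 - c ^ k) := by
            apply Real.rpow_le_rpow_of_exponent_le hn1
            have : c ^ k ≤ c ^ 1 := pow_le_pow_of_le_one hc0.le (by linarith) hk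
            linarith
          have h2 : L / 2 < (n : ℝ) ^ (1 / 2 : ℝ) / 2 := by
            have := log_lt_half (x := (n : ℝ) ^ (1 / 2 : ℝ)) (by positivity)
            rw [Real.log_rpow hnR] at this
            linarith
          have h3 : c ^ (k + 1) * L ≤ L := by
            have : c ^ (k + 1) ≤ 1 := pow_le_one₀ hc0.le (by linarith)
            nlinarith
          have h4 : (m : ℝ) ≤ T.card := by linarith
          exact_mod_cast h4
        obtain ⟨f, hf, hfb⟩ := snoc_blowup G M' hM'c g T hg hmT hgT
        refine ⟨m, f, hm1, ?_, hf, hfb⟩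
        have h1 : c ^ (k + 1) * L < m + 1 := Nat.lt_floor_add_one _
        have hm1R : (1 : ℝ) ≤ m := by exact_mod_cast hm1
        have h2 : c ^ (k + 1 + 1) * L ≤ c * (2 * m) := by
          rw [pow_succ]
          nlinarith
        have h3 : 4 * c ≤ δ := by
          have h4 : (2 : ℝ) ≤ ((k + 1 : ℕ) : ℝ) := by exact_mod_cast (by omega : 2 ≤ k + 1)
          have h5 : (2 : ℝ) ≤ ((k + 1).factorial : ℝ) := by
            exact_mod_cast (Nat.self_le_factorial (k + 1)).trans' (by omega)
          have h6 : (4 : ℝ) ≤ ((k + 1 : ℕ) : ℝ) * ((k + 1).factorial : ℝ) := by nlinarith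
          nlinarith
        nlinarith
    obtain ⟨m, f, hm, hsm, hf, hfb⟩ := key
    obtain ⟨g, T, hg, hT, hgT⟩ := extend_blowup G M δ hδ0 hs1 hm hsm hcV f hfb
      (fun a => (Finset.mem_filter.1 (hf a)).2)
    refine ⟨g, T, hg, ?_, hgT⟩
    rw [hcard] at hT
    refine (rpow_lt_pow_mul hn hL hL0 hc0 (by linarith) hsle).trans_le (le_trans ?_ hT)
    gcongr

/-! ### From unordered to ordered cliques -/

/-- Every `r`-clique has `r!` orderings. -/
lemma factorial_mul_cliqueCount_le {V : Type*} [Fintype V] [DecidableEq V] (G : SimpleGraph V)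
    (r : ℕ) : ∃ M : Finset (Fin r → V), (∀ f ∈ M, IsCliqueTuple G f) ∧
      r.factorial * G.cliqueCount r ≤ M.card := by
  classical
  refine ⟨Finset.univ.filter (IsCliqueTuple G), fun f hf => (Finset.mem_filter.1 hf).2, ?_⟩
  let _ := Classical.decRel G.Adj
  have hcl : G.cliqueCount r = (G.cliqueFinset r).card := by
    unfold SimpleGraph.cliqueCount
    congr!
  have hcd : ∀ C : {C // C ∈ G.cliqueFinset r}, C.1.card = r :=
    fun C => (SimpleGraph.mem_cliqueFinset_iff.1 C.2).2
  rw [hcl]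
  let φ : {C // C ∈ G.cliqueFinset r} × Equiv.Perm (Fin r) → Fin r → V :=
    fun p i => ((p.1.1.equivFinOfCardEq (hcd p.1)).symm (p.2 i) : V)
  have himg : ∀ p, Set.range (φ p) = (p.1.1 : Set V) := by
    intro p
    ext v
    constructor
    · rintro ⟨i, rfl⟩
      exact ((p.1.1.equivFinOfCardEq (hcd p.1)).symm (p.2 i)).2
    · intro hv
      exact ⟨p.2.symm (p.1.1.equivFinOfCardEq (hcd p.1) ⟨v, hv⟩), by simp [φ]⟩
  have hinj : Function.Injective φ := by
    rintro ⟨C, σ⟩ ⟨C', σ'⟩ h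
    have hC : C = C' := by
      have h1 := himg (C, σ)
      rw [h, himg] at h1
      exact Subtype.ext (Finset.coe_injective h1.symm)
    subst hC
    have hσ : σ = σ' := by
      ext i
      have := congrFun h i
      simp only [φ] at this
      have := (C.1.equivFinOfCardEq (hcd C)).symm.injective (Subtype.ext this)
      rw [this]
    rw [hσ]
  have hcardp : Fintype.card ({C // C ∈ G.cliqueFinset r} × Equiv.Perm (Fin r)) =
      r.factorial * (G.cliqueFinset r).card := by
    rw [Fintype.card_prod, Fintype.card_perm, Fintype.card_fin, Fintype.card_coe, mul_comm]
  rw [← hcardp, ← Finset.card_univ]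
  refine Finset.card_le_card_of_injOn φ ?_ hinj.injOn
  intro p _
  simp only [Finset.coe_filter, Finset.mem_univ, true_and, Set.mem_ofPred_eq]
  intro i j hij
  refine (SimpleGraph.mem_cliqueFinset_iff.1 p.1.2).1
    ((p.1.1.equivFinOfCardEq (hcd p.1)).symm (p.2 i)).2
    ((p.1.1.equivFinOfCardEq (hcd p.1)).symm (p.2 j)).2 ?_
  intro h
  exact hij (p.2.injective ((p.1.1.equivFinOfCardEq (hcd p.1)).symm.injective (Subtype.ext h)))

/-- Let `r ≥ 2`, `c > 0` with `c^r ln n ≥ 1`, and `G` a graph of order `n`. If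
`k_r(G) ≥ c n^r`, then `G` contains a complete `r`-partite subgraph
`K_r(s, …, s, t)` with `s = ⌊c^r ln n⌋` and `t > n^(1 - c^(r-1))`. -/
theorem clique_count_multipartite {V : Type*} [Fintype V] [DecidableEq V] (r n : ℕ)
    (hr : 2 ≤ r) (c : ℝ) (hc0 : 0 < c) (hc : 1 ≤ c ^ r * Real.log n)
    (G : SimpleGraph V) (hcard : Fintype.card V = n)
    (hk : c * (n : ℝ) ^ r ≤ (G.cliqueCount r : ℝ)) :
    ∃ t : ℕ, (n : ℝ) ^ (1 - c ^ (r - 1)) < (t : ℝ) ∧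
      G.ContainsKPartite
        (fun i : Fin r => if (i : ℕ) < r - 1 then ⌊c ^ r * Real.log n⌋₊ else t) := by
  obtain ⟨k, rfl⟩ : ∃ k, r = k + 1 := ⟨r - 1, by omega⟩
  obtain ⟨M, hM, hMc⟩ := factorial_mul_cliqueCount_le G (k + 1)
  have hMc' : ((k + 1).factorial : ℝ) * c * (n : ℝ) ^ (k + 1) ≤ (M.card : ℝ) := by
    have h1 : ((k + 1).factorial : ℝ) * (G.cliqueCount (k + 1) : ℝ) ≤ M.card := by
      exact_mod_cast hMc
    have h2 := mul_le_mul_of_nonneg_left hk (Nat.cast_nonneg (α := ℝ) (k + 1).factorial)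
    linarith
  obtain ⟨g, T, hg, hT, hgT⟩ :=
    many_tuples_multipartite G hcard hc0 k (by omega) hc M hM hMc'
  refine ⟨T.card, by simpa using hT, ?_⟩
  let A : Fin (k + 1) → Finset V :=
    Fin.snoc (α := fun _ => Finset V) (fun i => Finset.univ.image fun a => g a i) T
  have hadj : ∀ i j, i ≠ j → ∀ x ∈ A i, ∀ y ∈ A j, G.Adj x y := by
    intro i j hij x hx y hy
    induction i using Fin.lastCases with
    | last =>
      induction j using Fin.lastCases with
      | last => exact absurd rfl hij
      | cast j =>
        simp only [A, Fin.snoc_last, Fin.snoc_castSucc, Finset.mem_image, Finset.mem_univ,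
          true_and] at hx hy
        obtain ⟨b, rfl⟩ := hy
        exact (adj_of_snoc (hM _ (hgT b x hx)) j).symm
    | cast i =>
      induction j using Fin.lastCases with
      | last =>
        simp only [A, Fin.snoc_last, Fin.snoc_castSucc, Finset.mem_image, Finset.mem_univ,
          true_and] at hx hy
        obtain ⟨a, rfl⟩ := hx
        exact adj_of_snoc (hM _ (hgT a y hy)) i
      | cast j =>
        simp only [A, Fin.snoc_castSucc, Finset.mem_image, Finset.mem_univ, true_and] at hx hy
        obtain ⟨a, rfl⟩ := hx
        obtain ⟨b, rfl⟩ := hy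
        exact hg.1 a b i j fun h => hij (by rw [h])
  refine ⟨A, ?_, ?_, hadj⟩
  · intro i j hij
    rw [Finset.disjoint_left]
    intro x hx hx'
    exact G.loopless.irrefl x (hadj i j hij x hx x hx')
  · intro i
    induction i using Fin.lastCases with
    | last => simp [A]
    | cast i => simp [A, Finset.card_image_of_injective _ (hg.2 i)]
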